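/- Let v be a non-constant harmonic function on the open unit ball B₁ ⊂ ℝⁿ with Z(v) ∩ B_{1/2} ≠ ∅, set Z = Z(v) and δ(x) = dist(x, Z). Then there exist constants β = β(v) > 0 and c = c(v) ∈ (0, 1/2) such that for every harmonic function u on B₁ with Z(u) = Z and every point x ∈ B_{1/8}, there exists a point y ∈ B_{1/2} with δ(y) ≥ c and |u(y)| ≥ |u(x)| · δ(x)^β. -/

import Mathlib

open Metric Set Filter

noncomputable section

abbrev En (n : ℕ) : Type := EuclideanSpace ℝ (Fin n)

/-- The Laplacian of `u` at `x`, computed from the second iterated Fréchet derivative. -/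
def laplacianAt {n : ℕ} (u : En n → ℝ) (x : En n) : ℝ :=
  ∑ i : Fin n, iteratedFDeriv ℝ 2 u x ![EuclideanSpace.single i 1, EuclideanSpace.single i 1]

/-- `u` is harmonic on `Ω`: twice continuously differentiable with vanishing Laplacian. -/
def HarmonicOnSet {n : ℕ} (u : En n → ℝ) (Ω : Set (En n)) : Prop :=
  ContDiffOn ℝ 2 u Ω ∧ ∀ x ∈ Ω, laplacianAt u x = 0

/-- The zero set of `u` within `Ω`. -/
def zeroSet {n : ℕ} (u : En n → ℝ) (Ω : Set (En n)) : Set (En n) :=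
  {x ∈ Ω | u x = 0}

/-- The collection of nodal domains of `u` in `Ω`, i.e. the connected components of
`Ω \ Z(u)`. -/
def nodalComponents {n : ℕ} (u : En n → ℝ) (Ω : Set (En n)) : Set (Set (En n)) :=
  {C | ∃ x ∈ Ω \ zeroSet u Ω, C = connectedComponentIn (Ω \ zeroSet u Ω) x}

/-!
Let `w` be the weight `(1 - ‖y‖²)₊` of the unit ball. The gradient of `w²` is radial, so for
harmonic `f` and `g` an integration by parts shows that `∫ f (x + a y) g (x + b y) w y` depends on
`a` and `b` only through `a b`. With `g = 1` this is the mean value property; with `g = f` and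
Cauchy–Schwarz it says that the weighted mean square of a harmonic function over the ball of radius
`r` is logarithmically convex in `log r`. By compactness, all the functions `v - μ` satisfy one
doubling inequality at all centres and small scales.

Doubling has two consequences near the zero set `Z` of `v`, at distance `δ` from it: `|v|` is at
least a power of `δ`, and `|v|` grows by a fixed factor `1 + ε` at some point closer than `δ / 4`.
Hence one can climb away from `Z` along `v`. The length of each step is bounded by the increase of
`ψ = B |v|^q` with a small exponent `q`, so the total length telescopes and the climb starting in
`B_{1/8}` stays in `B_{1/4}`. If `u` has the same zero set, Harnack's inequality on the ball of
radius `δ`, where `u` has no zeros, bounds its loss in each step by a fixed factor, which the growth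
of a high power `|v|^γ` compensates. So `|u| |v|^γ` does not decrease along the climb, and it ends
at a fixed distance from `Z`; the lower bound on `|v|` at the start gives the power of `δ`.
-/

open MeasureTheory InnerProductSpace Module Topology Laplacian

theorem hasDerivAt_max_zero_sq (s : ℝ) :
    HasDerivAt (fun s : ℝ ↦ max 0 s ^ 2) (2 * max 0 s) s := by
  rcases lt_trichotomy s 0 with hs | rfl | hs
  · rw [max_eq_left hs.le, mul_zero]
    refine (hasDerivAt_const s (0 : ℝ)).congr_of_eventuallyEq ?_
    filter_upwards [Iio_mem_nhds hs] with t (ht : t < 0)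
    rw [max_eq_left ht.le, zero_pow two_ne_zero]
  · rw [max_self, mul_zero]
    refine HasDerivAt.of_isLittleO ?_
    refine Asymptotics.IsBigO.trans_isLittleO (g := fun t : ℝ ↦ t ^ 2) ?_ ?_
    · refine Asymptotics.IsBigO.of_bound 1 (Eventually.of_forall fun t ↦ ?_)
      rcases le_total t 0 with h | h <;> simp [h, sq_nonneg]
    · simpa using Asymptotics.isLittleO_pow_pow (𝕜 := ℝ) one_lt_two
  · rw [max_eq_right hs.le]
    have hsq : HasDerivAt (fun s : ℝ ↦ s ^ 2) (2 * s) s := by simpa using hasDerivAt_pow 2 s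
    refine hsq.congr_of_eventuallyEq ?_
    filter_upwards [Ioi_mem_nhds hs] with t (ht : 0 < t)
    rw [max_eq_right ht.le]

section BallWeight

variable {E : Type*} [NormedAddCommGroup E]

/-- The weight `(1 - ‖y‖²)₊` of the unit ball. It is chosen because the gradient of its square
is `-4 * ballWeight y • y`, so that integration by parts of a field against the square
produces the radial component of the field integrated against the weight itself. -/
def ballWeight (y : E) : ℝ := max 0 (1 - ‖y‖ ^ 2)

theorem continuous_ballWeight : Continuous (ballWeight (E := E)) := by
  unfold ballWeight; fun_prop

theorem ballWeight_nonneg (y : E) : 0 ≤ ballWeight y := le_max_left _ _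

theorem ballWeight_le_one (y : E) : ballWeight y ≤ 1 :=
  max_le zero_le_one (by linarith [sq_nonneg ‖y‖])

theorem one_sub_sq_le_ballWeight {y : E} {θ : ℝ} (hy : ‖y‖ ≤ θ) : 1 - θ ^ 2 ≤ ballWeight y :=
  le_max_of_le_right (by gcongr)

theorem ballWeight_pos_iff {y : E} : 0 < ballWeight y ↔ y ∈ ball 0 1 := by
  simp [ballWeight]

theorem ballWeight_eq_zero {y : E} (hy : y ∉ ball 0 1) : ballWeight y = 0 :=
  le_antisymm (not_lt.1 (mt ballWeight_pos_iff.1 hy)) (ballWeight_nonneg y)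

theorem hasCompactSupport_ballWeight [ProperSpace E] : HasCompactSupport (ballWeight (E := E)) :=
  HasCompactSupport.intro (isCompact_closedBall 0 1) fun _ hy ↦
    ballWeight_eq_zero (mt (fun h ↦ ball_subset_closedBall h) hy)

theorem hasFDerivAt_ballWeight_sq [InnerProductSpace ℝ E] (y : E) :
    HasFDerivAt (fun y : E ↦ ballWeight y ^ 2) ((-4 * ballWeight y) • innerSL ℝ y) y := by
  have hnorm : HasFDerivAt (fun y : E ↦ 1 - ‖y‖ ^ 2) (-(2 • innerSL ℝ y)) y :=
    (hasStrictFDerivAt_norm_sq y).hasFDerivAt.const_sub 1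
  refine ((hasDerivAt_max_zero_sq (1 - ‖y‖ ^ 2)).comp_hasFDerivAt y hnorm).congr_fderiv ?_
  ext z
  simp only [smul_neg, neg_apply, smul_apply, coe_innerSL_apply, nsmul_eq_mul, Nat.cast_ofNat,
    smul_eq_mul, ballWeight, neg_mul, neg_smul, neg_inj]
  ring

end BallWeight

section BallMeasure

variable {E : Type*} [NormedAddCommGroup E] [InnerProductSpace ℝ E] [FiniteDimensional ℝ E]
  [MeasurableSpace E] [BorelSpace E]

theorem integrable_mul_ballWeight {f : E → ℝ} (hf : Continuous f) :
    Integrable fun y ↦ f y * ballWeight y :=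
  (hf.mul continuous_ballWeight).integrable_of_hasCompactSupport
    hasCompactSupport_ballWeight.mul_left

theorem integral_ballWeight_pos : 0 < ∫ y : E, ballWeight y :=
  continuous_ballWeight.integral_pos_of_hasCompactSupport_nonneg_nonzero
    hasCompactSupport_ballWeight ballWeight_nonneg
    (ballWeight_pos_iff.2 (mem_ball_self one_pos)).ne'

variable (E) in
/-- The probability measure on the unit ball whose density is proportional to `ballWeight`. It
takes the place of surface measure on spheres in mean values of harmonic functions. -/
def ballMeasure : Measure E :=
  volume.withDensity fun y ↦ ENNReal.ofReal ((∫ z : E, ballWeight z)⁻¹ * ballWeight y)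

theorem integral_ballMeasure (f : E → ℝ) :
    ∫ y, f y ∂ballMeasure E = (∫ y : E, ballWeight y)⁻¹ * ∫ y, f y * ballWeight y := by
  have hmeas : AEMeasurable (fun y : E ↦
      ENNReal.ofReal ((∫ z : E, ballWeight z)⁻¹ * ballWeight y)) :=
    (continuous_ballWeight.measurable.const_mul _).ennreal_ofReal.aemeasurable
  rw [ballMeasure, integral_withDensity_eq_integral_toReal_smul₀ hmeas
    (Eventually.of_forall fun _ ↦ ENNReal.ofReal_lt_top), ← integral_const_mul]
  refine integral_congr_ae (Eventually.of_forall fun y ↦ ?_)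
  have := mul_nonneg (inv_pos.2 (integral_ballWeight_pos (E := E))).le (ballWeight_nonneg y)
  simp only [ENNReal.toReal_ofReal this, smul_eq_mul]
  ring

instance : IsProbabilityMeasure (ballMeasure E) where
  measure_univ := by
    have hW := integral_ballWeight_pos (E := E)
    have hint : Integrable (ballWeight (E := E)) :=
      continuous_ballWeight.integrable_of_hasCompactSupport hasCompactSupport_ballWeight
    rw [ballMeasure, withDensity_apply _ .univ, Measure.restrict_univ,
      ← ofReal_integral_eq_lintegral_ofReal (hint.const_mul _)
        (Eventually.of_forall fun y ↦ mul_nonneg (inv_pos.2 hW).le (ballWeight_nonneg y)),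
      integral_const_mul, inv_mul_cancel₀ hW.ne', ENNReal.ofReal_one]

theorem ae_ballMeasure_iff {p : E → Prop} :
    (∀ᵐ y ∂ballMeasure E, p y) ↔ ∀ᵐ y ∂volume.restrict (ball (0 : E) 1), p y := by
  have hmeas : Measurable fun y : E ↦
      ENNReal.ofReal ((∫ z : E, ballWeight z)⁻¹ * ballWeight y) :=
    (continuous_ballWeight.measurable.const_mul _).ennreal_ofReal
  rw [ballMeasure, ae_withDensity_iff hmeas, ae_restrict_iff' measurableSet_ball]
  simp only [ne_eq, ENNReal.ofReal_eq_zero, not_le,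
    mul_pos_iff_of_pos_left (inv_pos.2 (integral_ballWeight_pos (E := E))), ballWeight_pos_iff]

theorem ae_ballMeasure_mem_ball : ∀ᵐ y ∂ballMeasure E, y ∈ ball (0 : E) 1 :=
  ae_ballMeasure_iff.2 (ae_restrict_mem measurableSet_ball)

theorem integral_ballMeasure_congr {f g : E → ℝ} (h : EqOn f g (ball 0 1)) :
    ∫ y, f y ∂ballMeasure E = ∫ y, g y ∂ballMeasure E :=
  integral_congr_ae (ae_ballMeasure_mem_ball.mono fun _ hy ↦ h hy)

theorem aestronglyMeasurable_ballMeasure {f : E → ℝ} (hf : ContinuousOn f (closedBall 0 1)) :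
    AEStronglyMeasurable f (ballMeasure E) := by
  rw [← Measure.restrict_eq_self_of_ae_mem
    (ae_ballMeasure_mem_ball.mono fun y hy ↦ ball_subset_closedBall hy)]
  exact hf.aestronglyMeasurable measurableSet_closedBall

theorem integrable_ballMeasure {f : E → ℝ} (hf : ContinuousOn f (closedBall 0 1)) :
    Integrable f (ballMeasure E) := by
  rw [← Measure.restrict_eq_self_of_ae_mem
    (ae_ballMeasure_mem_ball.mono fun y hy ↦ ball_subset_closedBall hy)]
  exact hf.integrableOn_compact (isCompact_closedBall 0 1)

theorem eqOn_zero_of_integral_ballMeasure_eq_zero {f : E → ℝ}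
    (hf : ContinuousOn f (closedBall 0 1)) (hf0 : 0 ≤ f) (h : ∫ y, f y ∂ballMeasure E = 0) :
    EqOn f 0 (ball 0 1) := by
  rw [integral_eq_zero_iff_of_nonneg hf0 (integrable_ballMeasure hf)] at h
  exact Measure.eqOn_open_of_ae_eq (ae_ballMeasure_iff.1 h) isOpen_ball
    (hf.mono ball_subset_closedBall) continuousOn_const

theorem continuousOn_integral_ballMeasure {X : Type*} [TopologicalSpace X]
    [FirstCountableTopology X] {s : Set X} (hs : IsCompact s) {f : X → E → ℝ}
    (hf : ContinuousOn f.uncurry (s ×ˢ closedBall 0 1)) :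
    ContinuousOn (fun p ↦ ∫ y, f p y ∂ballMeasure E) s := by
  obtain ⟨C, hC⟩ := (hs.prod (isCompact_closedBall (0 : E) 1)).exists_bound_of_continuousOn hf
  refine continuousOn_of_dominated (bound := fun _ ↦ C) (fun p hp ↦ ?_) (fun p hp ↦ ?_)
    (integrable_const C) ?_
  · exact aestronglyMeasurable_ballMeasure
      (hf.comp (by fun_prop : ContinuousOn (fun y ↦ (p, y)) _) fun y hy ↦ ⟨hp, hy⟩)
  · exact ae_ballMeasure_mem_ball.mono fun y hy ↦ hC (p, y) ⟨hp, ball_subset_closedBall hy⟩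
  · exact ae_ballMeasure_mem_ball.mono fun y hy ↦
      hf.comp (by fun_prop : ContinuousOn (fun p ↦ (p, y)) s)
        fun p hp ↦ ⟨hp, ball_subset_closedBall hy⟩

theorem hasDerivAt_integral_ballMeasure {f f' : ℝ → E → ℝ} (hf : Continuous f.uncurry)
    (hf' : Continuous f'.uncurry) (hd : ∀ t y, HasDerivAt (f · y) (f' t y) t) (t : ℝ) :
    HasDerivAt (fun s ↦ ∫ y, f s y ∂ballMeasure E) (∫ y, f' t y ∂ballMeasure E) t := by
  obtain ⟨C, hC⟩ := ((isCompact_closedBall t 1).prod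
    (isCompact_closedBall (0 : E) 1)).exists_bound_of_continuousOn hf'.continuousOn
  have hfs (s : ℝ) : Continuous (f s) := hf.comp (by fun_prop : Continuous fun y ↦ (s, y))
  have hfs' : Continuous (f' t) := hf'.comp (by fun_prop : Continuous fun y ↦ (t, y))
  refine (hasDerivAt_integral_of_dominated_loc_of_deriv_le (bound := fun _ ↦ C)
    (closedBall_mem_nhds t one_pos)
    (Eventually.of_forall fun s ↦ (hfs s).aestronglyMeasurable)
    (integrable_ballMeasure (hfs t).continuousOn) hfs'.aestronglyMeasurable
    ?_ (integrable_const C) (Eventually.of_forall fun y s _ ↦ hd s y)).2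
  exact ae_ballMeasure_mem_ball.mono fun y hy s hs ↦
    hC (s, y) ⟨hs, ball_subset_closedBall hy⟩

theorem integral_fderiv_mul_ballWeight_sq {f : E → ℝ} (hf : ContDiff ℝ 1 f) (e : E) :
    ∫ y, fderiv ℝ f y e * ballWeight y ^ 2 = 4 * ∫ y, inner ℝ e y * f y * ballWeight y := by
  have hw := continuous_ballWeight (E := E)
  have hfc := hf.continuous
  have : Continuous fun y ↦ fderiv ℝ f y e :=
    (hf.continuous_fderiv one_ne_zero).clm_apply continuous_const
  have hd (y : E) : fderiv ℝ (fun y ↦ ballWeight y ^ 2) y e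
      = -4 * inner ℝ e y * ballWeight y := by
    rw [(hasFDerivAt_ballWeight_sq y).fderiv]
    simp only [FunLike.coe_smul, Pi.smul_apply, innerSL_apply_apply, smul_eq_mul,
      real_inner_comm]
    ring
  have hparts := integral_mul_fderiv_eq_neg_fderiv_mul_of_integrable (μ := volume)
    (f := f) (g := fun y ↦ ballWeight y ^ 2) (v := e) ?_ ?_ ?_
    (fun y _ ↦ hf.differentiable one_ne_zero y)
    (fun y _ ↦ (hasFDerivAt_ballWeight_sq y).differentiableAt)
  · rw [← neg_eq_iff_eq_neg] at hparts
    rw [← hparts, ← integral_neg, ← integral_const_mul]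
    congr! 2 with y
    rw [hd]
    ring
  · simp only [sq, ← mul_assoc]
    exact integrable_mul_ballWeight (by fun_prop)
  · simp only [hd, ← mul_assoc]
    exact integrable_mul_ballWeight (by fun_prop)
  · simp only [sq, ← mul_assoc]
    exact integrable_mul_ballWeight (by fun_prop)

theorem integral_clm_apply_self_ballMeasure {ι : Type*} [Fintype ι] (b : OrthonormalBasis ι ℝ E)
    {L : E → E →L[ℝ] ℝ} (hL : ContDiff ℝ 1 L)
    (hdiv : ∀ y ∈ ball (0 : E) 1, ∑ i, fderiv ℝ L y (b i) (b i) = 0) :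
    ∫ y, L y y ∂ballMeasure E = 0 := by
  have hLb (i : ι) : ContDiff ℝ 1 fun y ↦ L y (b i) := hL.clm_apply contDiff_const
  have hderiv (i : ι) (y : E) :
      fderiv ℝ (fun y ↦ L y (b i)) y (b i) = fderiv ℝ L y (b i) (b i) := by
    rw [fderiv_clm_apply (hL.differentiable one_ne_zero y) (differentiableAt_const _)]
    simp
  have hexpand (y : E) : L y y = ∑ i, inner ℝ (b i) y * L y (b i) := by
    calc L y y = L y (∑ i, inner ℝ (b i) y • b i) := by rw [b.sum_repr' y]
      _ = _ := by simp only [map_sum, map_smul, smul_eq_mul]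
  have hint (i : ι) : Integrable fun y ↦ inner ℝ (b i) y * L y (b i) * ballWeight y :=
    integrable_mul_ballWeight (by have := (hLb i).continuous; fun_prop)
  have hint' (i : ι) : Integrable fun y ↦ fderiv ℝ L y (b i) (b i) * ballWeight y ^ 2 := by
    have := hL.continuous_fderiv one_ne_zero
    have := continuous_ballWeight (E := E)
    simp only [sq, ← mul_assoc]
    exact integrable_mul_ballWeight (by fun_prop)
  have hzero : 4 * ∫ y, L y y * ballWeight y = 0 := calc
    _ = ∑ i, 4 * ∫ y, inner ℝ (b i) y * L y (b i) * ballWeight y := by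
      simp only [hexpand, Finset.sum_mul, integral_finsetSum _ fun i _ ↦ hint i, Finset.mul_sum]
    _ = ∫ y, (∑ i, fderiv ℝ L y (b i) (b i)) * ballWeight y ^ 2 := by
      simp only [← integral_fderiv_mul_ballWeight_sq (hLb _), hderiv, Finset.sum_mul,
        integral_finsetSum _ fun i _ ↦ hint' i]
    _ = 0 := by
      refine integral_eq_zero_of_ae (Eventually.of_forall fun y ↦ ?_)
      by_cases hy : y ∈ ball 0 1
      · simp [hdiv y hy]
      · simp [ballWeight_eq_zero hy]
  rw [integral_ballMeasure, (mul_eq_zero_iff_left four_ne_zero).1 hzero, mul_zero]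

end BallMeasure

theorem sq_integral_mul_le {α : Type*} [MeasurableSpace α] {μ : Measure α} {f g : α → ℝ}
    (hf : Integrable (fun a ↦ f a ^ 2) μ) (hg : Integrable (fun a ↦ g a ^ 2) μ)
    (hfg : Integrable (fun a ↦ f a * g a) μ) :
    (∫ a, f a * g a ∂μ) ^ 2 ≤ (∫ a, f a ^ 2 ∂μ) * ∫ a, g a ^ 2 ∂μ := by
  have hquad (t : ℝ) :
      0 ≤ (∫ a, f a ^ 2 ∂μ) * (t * t) + (2 * ∫ a, f a * g a ∂μ) * t + ∫ a, g a ^ 2 ∂μ :=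
    calc 0 ≤ ∫ a, (t * f a + g a) ^ 2 ∂μ := integral_nonneg fun a ↦ sq_nonneg _
      _ = ∫ a, (t * t * f a ^ 2 + 2 * t * (f a * g a) + g a ^ 2) ∂μ := by congr! 2; ring
      _ = t * t * (∫ a, f a ^ 2 ∂μ) + 2 * t * (∫ a, f a * g a ∂μ) + ∫ a, g a ^ 2 ∂μ := by
        rw [integral_add (by fun_prop) hg, integral_add (by fun_prop) (by fun_prop),
          integral_const_mul, integral_const_mul]
      _ = _ := by ring
  have := discrim_le_zero hquad
  rw [discrim] at this
  linarith

section AddSMul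

variable {E : Type*} [NormedAddCommGroup E] [NormedSpace ℝ E]

theorem add_smul_mem_ball {x y : E} {a r : ℝ} (ha : 0 < a) (har : a ≤ r) (hy : y ∈ ball 0 1) :
    x + a • y ∈ ball x r := by
  rw [mem_ball_iff_norm, add_sub_cancel_left, norm_smul, Real.norm_of_nonneg ha.le]
  exact (mul_lt_of_lt_one_right ha (mem_ball_zero_iff.1 hy)).trans_le har

theorem add_smul_mem_closedBall {x y : E} {a r : ℝ} (ha : 0 ≤ a) (har : a ≤ r)
    (hy : y ∈ closedBall 0 1) : x + a • y ∈ closedBall x r := by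
  rw [mem_closedBall_iff_norm, add_sub_cancel_left, norm_smul, Real.norm_of_nonneg ha]
  exact (mul_le_of_le_one_right ha (mem_closedBall_zero_iff.1 hy)).trans har

theorem continuousOn_comp_add_smul {f : E → ℝ} {x : E} {r : ℝ} (hr : 0 ≤ r)
    (hf : ContinuousOn f (closedBall x r)) :
    ContinuousOn (fun y ↦ f (x + r • y)) (closedBall 0 1) :=
  hf.comp (by fun_prop) fun _ hy ↦ add_smul_mem_closedBall hr le_rfl hy

theorem inv_smul_sub_mem_ball_iff {p x : E} {r θ : ℝ} (hr : 0 < r) :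
    r⁻¹ • (p - x) ∈ ball (0 : E) θ ↔ p ∈ ball x (θ * r) := by
  rw [mem_ball_zero_iff, norm_smul, norm_inv, Real.norm_of_nonneg hr.le, inv_mul_lt_iff₀ hr,
    mem_ball_iff_norm, mul_comm]

theorem ballWeight_inv_smul_sub_le {x x' : E} {r R θ : ℝ} (hr : 0 < r) (hR : 0 < R)
    (hθ : θ ^ 2 < 1) (hsub : ball x r ⊆ ball x' (θ * R)) (p : E) :
    ballWeight (r⁻¹ • (p - x)) ≤ (1 - θ ^ 2)⁻¹ * ballWeight (R⁻¹ • (p - x')) := by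
  have hθ' : 0 < 1 - θ ^ 2 := sub_pos.2 hθ
  by_cases hp : p ∈ ball x r
  · have hwR : 1 - θ ^ 2 ≤ ballWeight (R⁻¹ • (p - x')) := one_sub_sq_le_ballWeight
      (mem_ball_zero_iff.1 ((inv_smul_sub_mem_ball_iff hR).2 (hsub hp))).le
    calc ballWeight (r⁻¹ • (p - x)) ≤ 1 := ballWeight_le_one _
      _ = (1 - θ ^ 2)⁻¹ * (1 - θ ^ 2) := (inv_mul_cancel₀ hθ'.ne').symm
      _ ≤ (1 - θ ^ 2)⁻¹ * ballWeight (R⁻¹ • (p - x')) := by gcongr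
  · rw [ballWeight_eq_zero (by rwa [inv_smul_sub_mem_ball_iff hr, one_mul])]
    exact mul_nonneg (inv_pos.2 hθ').le (ballWeight_nonneg _)

end AddSMul

section Dilation

variable {E : Type*} [NormedAddCommGroup E] [InnerProductSpace ℝ E] [FiniteDimensional ℝ E]

theorem laplacian_eq_sum_fderiv_fderiv {ι : Type*} [Fintype ι] (b : OrthonormalBasis ι ℝ E)
    (u : E → ℝ) (x : E) : Δ u x = ∑ i, fderiv ℝ (fderiv ℝ u) x (b i) (b i) := by
  simp [laplacian_eq_iteratedFDeriv_orthonormalBasis u b, iteratedFDeriv_two_apply]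

theorem exists_contDiff_eqOn_ball {n : ℕ} {u : E → ℝ} {x : E} {r : ℝ} (hr : 0 < r)
    (hu : ∀ y ∈ closedBall x r, ContDiffAt ℝ n u y) :
    ∃ w : E → ℝ, ContDiff ℝ n w ∧ EqOn w u (ball x r) := by
  have hopen : IsOpen {y | ContDiffAt ℝ n u y} :=
    isOpen_iff_mem_nhds.2 fun y hy ↦ ContDiffAt.eventually hy (by simp)
  obtain ⟨δ, hδ, hsub⟩ := (isCompact_closedBall x r).exists_thickening_subset_open hopen hu
  rw [thickening_closedBall hδ hr.le] at hsub
  let bump : ContDiffBump x := ⟨r, r + δ / 2, hr, by linarith⟩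
  refine ⟨fun y ↦ bump y * u y, contDiff_iff_contDiffAt.2 fun y ↦ ?_, fun y hy ↦ ?_⟩
  · by_cases hy : y ∈ tsupport bump
    · have hy' : y ∈ closedBall x (r + δ / 2) := bump.tsupport_eq.subset hy
      exact bump.contDiffAt.mul (hsub (closedBall_subset_ball (by linarith) hy'))
    · refine (contDiffAt_const (c := 0)).congr_of_eventuallyEq ?_
      filter_upwards [notMem_tsupport_iff_eventuallyEq.1 hy] with z hz
      rw [hz, Pi.zero_apply, zero_mul]
  · simp only [bump.one_of_mem_closedBall (ball_subset_closedBall hy), one_mul]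

variable [MeasurableSpace E] [BorelSpace E]

theorem integral_dilation_antisymm {u w : E → ℝ} (hu : ContDiff ℝ 2 u) (hw : ContDiff ℝ 2 w)
    {x : E} {a b : ℝ} (hΔu : ∀ y ∈ ball (0 : E) 1, Δ u (x + a • y) = 0)
    (hΔw : ∀ y ∈ ball (0 : E) 1, Δ w (x + b • y) = 0) :
    ∫ y, (a * w (x + b • y) * fderiv ℝ u (x + a • y) y
      - b * u (x + a • y) * fderiv ℝ w (x + b • y) y) ∂ballMeasure E = 0 := by
  have hu' : ContDiff ℝ 1 (fderiv ℝ u) := hu.fderiv_right (by norm_num)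
  have hw' : ContDiff ℝ 1 (fderiv ℝ w) := hw.fderiv_right (by norm_num)
  have hu1 : ContDiff ℝ 1 u := hu.of_le one_le_two
  have hw1 : ContDiff ℝ 1 w := hw.of_le one_le_two
  let L (y : E) : E →L[ℝ] ℝ := (a * w (x + b • y)) • fderiv ℝ u (x + a • y)
    - (b * u (x + a • y)) • fderiv ℝ w (x + b • y)
  refine integral_clm_apply_self_ballMeasure (stdOrthonormalBasis ℝ E) (L := L) (by fun_prop)
    fun y hy ↦ ?_
  have hpath (c : ℝ) : HasFDerivAt (fun y : E ↦ x + c • y) (c • ContinuousLinearMap.id ℝ E) y :=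
    ((hasFDerivAt_id y).const_smul c).const_add x
  have hdu := (hu1.differentiable one_ne_zero (x + a • y)).hasFDerivAt.comp y (hpath a)
  have hdw := (hw1.differentiable one_ne_zero (x + b • y)).hasFDerivAt.comp y (hpath b)
  have hddu := (hu'.differentiable one_ne_zero (x + a • y)).hasFDerivAt.comp y (hpath a)
  have hddw := (hw'.differentiable one_ne_zero (x + b • y)).hasFDerivAt.comp y (hpath b)
  have hL : fderiv ℝ L y = _ :=
    (((hdw.const_mul a).smul hddu).sub ((hdu.const_mul b).smul hddw)).fderiv
  have hΔu := hΔu y hy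
  have hΔw := hΔw y hy
  rw [laplacian_eq_sum_fderiv_fderiv (stdOrthonormalBasis ℝ E)] at hΔu hΔw
  calc _ = ∑ i, (a ^ 2 * w (x + b • y) * fderiv ℝ (fderiv ℝ u) (x + a • y)
          (stdOrthonormalBasis ℝ E i) (stdOrthonormalBasis ℝ E i)
        - b ^ 2 * u (x + a • y) * fderiv ℝ (fderiv ℝ w) (x + b • y)
          (stdOrthonormalBasis ℝ E i) (stdOrthonormalBasis ℝ E i)) := by
        refine Finset.sum_congr rfl fun i _ ↦ ?_
        simp only [hL, Function.comp_apply, ContinuousLinearMap.comp_smulₛₗ, Real.ringHom_apply,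
          ContinuousLinearMap.comp_id, sub_apply, add_apply, smul_apply,
          ContinuousLinearMap.smulRight_apply, smul_eq_mul]
        ring
    _ = 0 := by
      rw [Finset.sum_sub_distrib, ← Finset.mul_sum, ← Finset.mul_sum, hΔu, hΔw]
      simp

theorem hasDerivAt_integral_dilation {u w : E → ℝ} (hu : ContDiff ℝ 1 u) (hw : ContDiff ℝ 1 w)
    (x : E) (a b t : ℝ) :
    HasDerivAt (fun s ↦ ∫ y, u (x + (a * Real.exp s) • y) * w (x + (b * Real.exp (-s)) • y)
        ∂ballMeasure E)
      (∫ y, (a * Real.exp t * w (x + (b * Real.exp (-t)) • y)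
          * fderiv ℝ u (x + (a * Real.exp t) • y) y
        - b * Real.exp (-t) * u (x + (a * Real.exp t) • y)
          * fderiv ℝ w (x + (b * Real.exp (-t)) • y) y) ∂ballMeasure E) t := by
  have hu0 := hu.continuous
  have hw0 := hw.continuous
  have := hu.continuous_fderiv one_ne_zero
  have := hw.continuous_fderiv one_ne_zero
  refine hasDerivAt_integral_ballMeasure
    (f := fun s y ↦ u (x + (a * Real.exp s) • y) * w (x + (b * Real.exp (-s)) • y))
    (f' := fun s y ↦ a * Real.exp s * w (x + (b * Real.exp (-s)) • y)
          * fderiv ℝ u (x + (a * Real.exp s) • y) y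
        - b * Real.exp (-s) * u (x + (a * Real.exp s) • y)
          * fderiv ℝ w (x + (b * Real.exp (-s)) • y) y)
    (by simp only [Function.uncurry_def]; fun_prop)
    (by simp only [Function.uncurry_def]; fun_prop) (fun s y ↦ ?_) t
  have hexp : HasDerivAt (fun s ↦ x + (a * Real.exp s) • y) ((a * Real.exp s) • y) s :=
    (((Real.hasDerivAt_exp s).const_mul a).smul_const y).const_add x
  have hexp' : HasDerivAt (fun s ↦ x + (b * Real.exp (-s)) • y) ((-(b * Real.exp (-s))) • y) s := by
    simpa using (((hasDerivAt_neg s).exp.const_mul b).smul_const y).const_add x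
  refine (((hu.differentiable one_ne_zero _).hasFDerivAt.comp_hasDerivAt s hexp).mul
    ((hw.differentiable one_ne_zero _).hasFDerivAt.comp_hasDerivAt s hexp')).congr_deriv ?_
  simp only [Function.comp_apply, map_smul, smul_eq_mul]
  ring

theorem integral_dilation_eq_of_contDiff {u w : E → ℝ} (hu : ContDiff ℝ 2 u)
    (hw : ContDiff ℝ 2 w) {x : E} {a a' b b' : ℝ} (ha : 0 < a) (haa' : a ≤ a') (hb : 0 < b)
    (hab : a * b = a' * b') (hΔu : ∀ y ∈ ball x a', Δ u y = 0)
    (hΔw : ∀ y ∈ ball x b, Δ w y = 0) :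
    ∫ y, u (x + a • y) * w (x + b • y) ∂ballMeasure E
      = ∫ y, u (x + a' • y) * w (x + b' • y) ∂ballMeasure E := by
  have ha' : 0 < a' := ha.trans_le haa'
  set T := Real.log (a' / a)
  have hT : Real.exp T = a' / a := Real.exp_log (by positivity)
  have hconst := constant_of_has_deriv_right_zero (a := 0) (b := T)
    (fun s _ ↦ (hasDerivAt_integral_dilation (hu.of_le one_le_two) (hw.of_le one_le_two)
      x a b s).continuousAt.continuousWithinAt) (fun s hs ↦ by
    have hle : a * Real.exp s ≤ a' := by
      calc a * Real.exp s ≤ a * Real.exp T := by gcongr; exact hs.2.le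
        _ = a' := by rw [hT]; field_simp
    have hle' : b * Real.exp (-s) ≤ b :=
      mul_le_of_le_one_right hb.le (Real.exp_le_one_iff.2 (by linarith [hs.1]))
    rw [← integral_dilation_antisymm (x := x) hu hw
      (fun y hy ↦ hΔu _ (add_smul_mem_ball (a := a * Real.exp s) (by positivity) hle hy))
      (fun y hy ↦ hΔw _ (add_smul_mem_ball (a := b * Real.exp (-s)) (by positivity) hle' hy))]
    exact (hasDerivAt_integral_dilation (hu.of_le one_le_two) (hw.of_le one_le_two)
      x a b s).hasDerivWithinAt)
  have hb' : b * Real.exp (-T) = b' := by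
    rw [Real.exp_neg, hT]
    field_simp
    linarith
  have hTnonneg : 0 ≤ T := Real.log_nonneg ((one_le_div ha).2 haa')
  have := hconst T ⟨hTnonneg, le_rfl⟩
  simp only [hT, hb', mul_div_cancel₀ a' ha.ne'] at this
  simpa using this.symm

theorem integral_dilation_eq {u w : E → ℝ} {x : E} {a a' b b' : ℝ} (ha : 0 < a) (haa' : a ≤ a')
    (hb : 0 < b) (hab : a * b = a' * b') (hu : HarmonicOnNhd u (closedBall x a'))
    (hw : HarmonicOnNhd w (closedBall x b)) :
    ∫ y, u (x + a • y) * w (x + b • y) ∂ballMeasure E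
      = ∫ y, u (x + a' • y) * w (x + b' • y) ∂ballMeasure E := by
  have ha' : 0 < a' := ha.trans_le haa'
  have hb' : 0 < b' := (mul_pos_iff_of_pos_left ha').1 (hab ▸ mul_pos ha hb)
  have hb'b : b' ≤ b := by nlinarith
  obtain ⟨u₁, hu₁, hu₁u⟩ := exists_contDiff_eqOn_ball ha' fun y hy ↦ (hu y hy).1
  obtain ⟨w₁, hw₁, hw₁w⟩ := exists_contDiff_eqOn_ball hb fun y hy ↦ (hw y hy).1
  have hΔ {f f₁ : E → ℝ} {r : ℝ} (hf : HarmonicOnNhd f (closedBall x r))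
      (hff₁ : EqOn f₁ f (ball x r)) : ∀ y ∈ ball x r, Δ f₁ y = 0 := fun y hy ↦ by
    rw [(laplacian_congr_nhds (hff₁.eventuallyEq_of_mem (isOpen_ball.mem_nhds hy))).eq_of_nhds]
    exact (hf y (ball_subset_closedBall hy)).2.eq_of_nhds
  have h := integral_dilation_eq_of_contDiff hu₁ hw₁ ha haa' hb hab (hΔ hu hu₁u) (hΔ hw hw₁w)
  convert h using 1 <;> refine integral_ballMeasure_congr fun y hy ↦ ?_
  · simp only [hu₁u (add_smul_mem_ball ha haa' hy), hw₁w (add_smul_mem_ball hb le_rfl hy)]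
  · simp only [hu₁u (add_smul_mem_ball ha' le_rfl hy), hw₁w (add_smul_mem_ball hb' hb'b hy)]

theorem integral_ball_eq_center {v : E → ℝ} {x : E} {r : ℝ} (hr : 0 < r)
    (hv : HarmonicOnNhd v (closedBall x r)) : ∫ y, v (x + r • y) ∂ballMeasure E = v x := by
  have hcont : ContinuousOn (fun s ↦ ∫ y, v (x + s • y) ∂ballMeasure E) (Icc 0 r) :=
    continuousOn_integral_ballMeasure isCompact_Icc <|
      hv.continuousOn.comp (by fun_prop) fun p hp ↦ add_smul_mem_closedBall hp.1.1 hp.1.2 hp.2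
  have hdil {s : ℝ} (hs : s ∈ Ioc 0 r) :
      ∫ y, v (x + s • y) ∂ballMeasure E = ∫ y, v (x + r • y) ∂ballMeasure E := by
    simpa using integral_dilation_eq (w := fun _ ↦ 1) hs.1 hs.2 hr (mul_comm s r) hv
      (harmonicOnNhd_const 1)
  have hlim := (hcont 0 (left_mem_Icc.2 hr.le)).mono Ioc_subset_Icc_self
  have hne : (𝓝[Ioc 0 r] (0 : ℝ)).NeBot := by
    rw [nhdsWithin_Ioc_eq_nhdsGT hr]; infer_instance
  have hlim' := tendsto_nhds_unique (tendsto_const_nhds.congr' (eventually_nhdsWithin_of_forall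
    fun s hs ↦ (hdil hs).symm)) hlim.tendsto
  simpa using hlim'

end Dilation

section SqMean

variable {E : Type*} [NormedAddCommGroup E] [InnerProductSpace ℝ E] [FiniteDimensional ℝ E]
  [MeasurableSpace E] [BorelSpace E]

/-- The mean of `f ^ 2` over the ball of radius `r` around `x`, with respect to `ballMeasure`
transported to that ball. Its dependence on `r` measures the growth of `f` around `x`. -/
def sqMean (f : E → ℝ) (x : E) (r : ℝ) : ℝ := ∫ y, f (x + r • y) ^ 2 ∂ballMeasure E

theorem sqMean_nonneg (f : E → ℝ) (x : E) (r : ℝ) : 0 ≤ sqMean f x r :=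
  integral_nonneg fun _ ↦ sq_nonneg _

theorem sqMean_eq_zero_iff {f : E → ℝ} {x : E} {r : ℝ} (hr : 0 < r)
    (hf : ContinuousOn f (closedBall x r)) : sqMean f x r = 0 ↔ EqOn f 0 (ball x r) := by
  refine ⟨fun h p hp ↦ ?_, fun h ↦ ?_⟩
  · have hmem : r⁻¹ • (p - x) ∈ ball (0 : E) 1 :=
      (inv_smul_sub_mem_ball_iff hr).2 (by rwa [one_mul])
    have := eqOn_zero_of_integral_ballMeasure_eq_zero
      ((continuousOn_comp_add_smul hr.le hf).pow 2) (fun _ ↦ sq_nonneg _) h hmem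
    simpa [smul_inv_smul₀ hr.ne'] using this
  · rw [sqMean, integral_ballMeasure_congr (g := fun _ ↦ 0), integral_zero]
    exact fun y hy ↦ by simp [h (add_smul_mem_ball hr le_rfl hy)]

theorem continuousOn_sqMean {X : Type*} [TopologicalSpace X] [FirstCountableTopology X]
    {s : Set X} (hs : IsCompact s) {f : X → E → ℝ} {x : X → E} {r : X → ℝ}
    (hf : ContinuousOn (fun p : X × E ↦ f p.1 (x p.1 + r p.1 • p.2)) (s ×ˢ closedBall 0 1)) :
    ContinuousOn (fun p ↦ sqMean (f p) (x p) (r p)) s :=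
  continuousOn_integral_ballMeasure hs (hf.pow 2)

theorem sqMean_sq_le {f : E → ℝ} {x : E} {κ r : ℝ} (hr : 0 < r) (hκ : 1 ≤ κ)
    (hf : HarmonicOnNhd f (closedBall x (κ ^ 2 * r))) :
    sqMean f x (κ * r) ^ 2 ≤ sqMean f x r * sqMean f x (κ ^ 2 * r) := by
  have hr₁ : r ≤ κ * r := le_mul_of_one_le_left hr.le hκ
  have hr₂ : κ * r ≤ κ ^ 2 * r := by nlinarith
  have hdil := integral_dilation_eq (b' := r) (hr.trans_le hr₁) hr₂ (hr.trans_le hr₁) (by ring) hf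
    (hf.mono (closedBall_subset_closedBall hr₂))
  have hfr := continuousOn_comp_add_smul hr.le
    (hf.continuousOn.mono (closedBall_subset_closedBall (hr₁.trans hr₂)))
  have hft := continuousOn_comp_add_smul (hr.le.trans (hr₁.trans hr₂)) hf.continuousOn
  calc sqMean f x (κ * r) ^ 2
      = (∫ y, f (x + r • y) * f (x + (κ ^ 2 * r) • y) ∂ballMeasure E) ^ 2 := by
        simp only [sqMean, sq (f _), hdil, mul_comm (f (x + r • _))]
    _ ≤ sqMean f x r * sqMean f x (κ ^ 2 * r) :=
        sq_integral_mul_le (integrable_ballMeasure (hfr.pow 2))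
          (integrable_ballMeasure (hft.pow 2)) (integrable_ballMeasure (hfr.mul hft))

theorem sqMean_sub_center {f : E → ℝ} {x : E} {r : ℝ} (hr : 0 < r)
    (hf : HarmonicOnNhd f (closedBall x r)) :
    sqMean (fun y ↦ f y - f x) x r = sqMean f x r - f x ^ 2 := by
  have hfr := continuousOn_comp_add_smul hr.le hf.continuousOn
  have hint : Integrable (fun y ↦ 2 * f x * f (x + r • y)) (ballMeasure E) :=
    (integrable_ballMeasure hfr).const_mul _
  have hint2 : Integrable (fun y ↦ f (x + r • y) ^ 2) (ballMeasure E) :=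
    integrable_ballMeasure (hfr.pow 2)
  calc _ = ∫ y, (f (x + r • y) ^ 2 - 2 * f x * f (x + r • y) + f x ^ 2) ∂ballMeasure E := by
        simp only [sqMean]
        congr! 2
        ring
    _ = sqMean f x r - 2 * f x * ∫ y, f (x + r • y) ∂ballMeasure E + f x ^ 2 := by
        rw [integral_add (by fun_prop) (by fun_prop), integral_sub hint2 hint,
          integral_const_mul, integral_const]
        simp [sqMean]
    _ = sqMean f x r - f x ^ 2 := by
        rw [integral_ball_eq_center hr hf]
        ring

theorem sq_le_sqMean {f : E → ℝ} {x : E} {r : ℝ} (hr : 0 < r)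
    (hf : HarmonicOnNhd f (closedBall x r)) : f x ^ 2 ≤ sqMean f x r := by
  have := sqMean_nonneg (fun y ↦ f y - f x) x r
  rw [sqMean_sub_center hr hf] at this
  linarith

end SqMean

section Comparison

variable {E : Type*} [NormedAddCommGroup E] [InnerProductSpace ℝ E] [FiniteDimensional ℝ E]
  [MeasurableSpace E] [BorelSpace E]

theorem integral_comp_add_smul_mul_ballWeight (f : E → ℝ) (x : E) {r : ℝ} (hr : 0 < r) :
    ∫ y, f (x + r • y) * ballWeight y
      = (r ^ finrank ℝ E)⁻¹ * ∫ p, f p * ballWeight (r⁻¹ • (p - x)) := by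
  have hscale := Measure.integral_comp_smul_of_nonneg volume
    (fun q ↦ f (x + q) * ballWeight (r⁻¹ • q)) r (hR := hr.le)
  simp only [inv_smul_smul₀ hr.ne', smul_eq_mul] at hscale
  rw [hscale, ← integral_add_left_eq_self (fun p ↦ f p * ballWeight (r⁻¹ • (p - x))) x]
  simp only [add_sub_cancel_left]

theorem integrable_mul_ballWeight_inv_smul_sub {f : E → ℝ} {x : E} {r : ℝ} (hr : 0 < r)
    (hf : ContinuousOn f (closedBall x r)) :
    Integrable fun p ↦ f p * ballWeight (r⁻¹ • (p - x)) := by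
  refine (integrableOn_iff_integrable_of_support_subset (s := closedBall x r) ?_).1
    (ContinuousOn.integrableOn_compact (isCompact_closedBall x r) ?_)
  · intro p hp
    by_contra hpr
    refine hp (mul_eq_zero_of_right _ (ballWeight_eq_zero ?_))
    rw [inv_smul_sub_mem_ball_iff hr, one_mul]
    exact mt (fun h ↦ ball_subset_closedBall h) hpr
  · have := continuous_ballWeight (E := E)
    fun_prop

theorem integral_ballMeasure_le_of_ball_subset {f : E → ℝ} {x x' : E} {r R θ : ℝ} (hr : 0 < r)
    (hR : 0 < R) (hθ : θ ^ 2 < 1) (hsub : ball x r ⊆ ball x' (θ * R))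
    (hf : ContinuousOn f (closedBall x' R)) (hf0 : ∀ p ∈ ball x' R, 0 ≤ f p) :
    ∫ y, f (x + r • y) ∂ballMeasure E
      ≤ (1 - θ ^ 2)⁻¹ * (R / r) ^ finrank ℝ E * ∫ y, f (x' + R • y) ∂ballMeasure E := by
  have hsubR : ball x r ⊆ ball x' R := hsub.trans (ball_subset_ball
    (mul_le_of_le_one_left hR.le (abs_lt.1 ((sq_lt_one_iff_abs_lt_one θ).1 hθ)).2.le))
  have hzero {c : ℝ} {p q : E} (hc : 0 < c) (hp : p ∉ ball q c) :
      ballWeight (c⁻¹ • (p - q)) = 0 :=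
    ballWeight_eq_zero (by rwa [inv_smul_sub_mem_ball_iff hc, one_mul])
  have hle : ∫ p, f p * ballWeight (r⁻¹ • (p - x))
      ≤ ∫ p, (1 - θ ^ 2)⁻¹ * (f p * ballWeight (R⁻¹ • (p - x'))) := by
    refine integral_mono_of_nonneg (Eventually.of_forall fun p ↦ ?_)
      ((integrable_mul_ballWeight_inv_smul_sub hR hf).const_mul _)
      (Eventually.of_forall fun p ↦ ?_) <;> by_cases hp : p ∈ ball x' R
    · exact mul_nonneg (hf0 p hp) (ballWeight_nonneg _)
    · simp [hzero hr (mt (fun h ↦ hsubR h) hp)]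
    · have := mul_le_mul_of_nonneg_left (ballWeight_inv_smul_sub_le hr hR hθ hsub p) (hf0 p hp)
      rwa [mul_left_comm] at this
    · simp [hzero hr (mt (fun h ↦ hsubR h) hp), hzero hR hp]
  have hW := integral_ballWeight_pos (E := E)
  rw [integral_const_mul] at hle
  rw [integral_ballMeasure, integral_ballMeasure, integral_comp_add_smul_mul_ballWeight f x hr,
    integral_comp_add_smul_mul_ballWeight f x' hR]
  calc _ ≤ (∫ y : E, ballWeight y)⁻¹ * ((r ^ finrank ℝ E)⁻¹ *
        ((1 - θ ^ 2)⁻¹ * ∫ p, f p * ballWeight (R⁻¹ • (p - x')))) := by gcongr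
    _ = _ := by
      rw [div_pow]
      field_simp

theorem harnack {f : E → ℝ} {a b : E} {s : ℝ} (hs : 0 < s)
    (hf : HarmonicOnNhd f (closedBall a (3 * s))) (hf0 : ∀ y ∈ ball a (3 * s), 0 ≤ f y)
    (hab : dist b a ≤ s) : f b ≤ 9 / 5 * 3 ^ finrank ℝ E * f a := by
  have hcomp := integral_ballMeasure_le_of_ball_subset (x := b) (θ := 2 / 3) hs (by positivity)
    (by norm_num) (ball_subset_ball' (by linarith)) hf.continuousOn hf0
  rw [integral_ball_eq_center hs (hf.mono (closedBall_subset_closedBall' (by linarith))),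
    integral_ball_eq_center (by positivity) hf, mul_div_cancel_right₀ 3 hs.ne'] at hcomp
  norm_num at hcomp
  exact hcomp

end Comparison

theorem harmonicOnNhd_abs {E : Type*} [NormedAddCommGroup E] [InnerProductSpace ℝ E]
    [FiniteDimensional ℝ E] {v : E → ℝ} {s : Set E} (hv : HarmonicOnNhd v s)
    (hne : ∀ x ∈ s, v x ≠ 0) : HarmonicOnNhd |v| s := by
  intro x hx
  have hcont : ContinuousAt v x := (hv x hx).1.continuousAt
  rcases (hne x hx).lt_or_gt with h | h
  · refine (harmonicAt_congr_nhds ?_).2 (hv x hx).neg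
    filter_upwards [hcont.eventually_lt_const h] with y hy using abs_of_neg hy
  · refine (harmonicAt_congr_nhds ?_).2 (hv x hx)
    filter_upwards [hcont.eventually_const_lt h] with y hy using abs_of_pos hy

theorem harnack_abs {E : Type*} [NormedAddCommGroup E] [InnerProductSpace ℝ E]
    [FiniteDimensional ℝ E] {v : E → ℝ} {a b : E} {s : ℝ} (hs : 0 < s)
    (hv : HarmonicOnNhd v (closedBall a (3 * s))) (hne : ∀ y ∈ closedBall a (3 * s), v y ≠ 0)
    (hab : dist b a ≤ s) : |v b| ≤ 9 / 5 * 3 ^ finrank ℝ E * |v a| := by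
  borelize E
  exact harnack hs (harmonicOnNhd_abs hv hne) (fun y _ ↦ abs_nonneg (v y)) hab

section Scales

variable {h : ℝ → ℝ} {κ ρ : ℝ}

theorem forall_mem_Ioc_of_scale_step {P : ℝ → Prop} (hκ : 1 < κ)
    (hbase : ∀ r ∈ Ioc (ρ / κ) ρ, P r) (hstep : ∀ r, 0 < r → κ * r ≤ ρ → P (κ * r) → P r) :
    ∀ r ∈ Ioc 0 ρ, P r := by
  have hκ0 : 0 < κ := one_pos.trans hκ
  have hpow (k : ℕ) : ∀ r ∈ Ioc 0 ρ, ρ < κ ^ k * r → P r := by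
    induction k with
    | zero => exact fun r hr hlt ↦ absurd hr.2 (by linarith)
    | succ k ih =>
      intro r hr hlt
      by_cases hle : κ * r ≤ ρ
      · exact hstep r hr.1 hle (ih _ ⟨mul_pos hκ0 hr.1, hle⟩ (by rwa [← mul_assoc, ← pow_succ]))
      · exact hbase r ⟨(div_lt_iff₀' hκ0).2 (not_le.1 hle), hr.2⟩
  intro r hr
  obtain ⟨k, hk⟩ := pow_unbounded_of_one_lt (ρ / r) hκ
  exact hpow k r hr ((div_lt_iff₀ hr.1).1 hk)

theorem ne_zero_of_sq_le_mul {T : ℝ} (hρ : 0 < ρ) (hρT : ρ < T)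
    (hconv : ∀ κ r, 1 ≤ κ → 0 < r → κ ^ 2 * r ≤ T → h (κ * r) ^ 2 ≤ h r * h (κ ^ 2 * r))
    (hne : h ρ ≠ 0) : ∀ r ∈ Ioc 0 ρ, h r ≠ 0 := by
  refine forall_mem_Ioc_of_scale_step (κ := T / ρ) ((one_lt_div hρ).2 hρT) (fun r hr hr0 ↦ hne ?_)
    fun r hr hle hne' hr0 ↦ hne' ?_
  · have hT : 0 < T := hρ.trans hρT
    have hr' : 0 < r := lt_of_le_of_lt (by positivity) hr.1
    have hle : (ρ / r) ^ 2 * r ≤ T := by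
      have := (div_lt_iff₀ (by positivity)).1 hr.1
      field_simp at this ⊢
      linarith
    simpa [div_mul_cancel₀ ρ hr'.ne', hr0] using hconv (ρ / r) r ((one_le_div hr').2 hr.2) hr' hle
  · have hle' : (T / ρ) ^ 2 * r ≤ T := by
      rw [sq, mul_assoc]
      calc T / ρ * (T / ρ * r) ≤ T / ρ * ρ := by
            have := hρ.trans hρT
            gcongr
        _ = T := div_mul_cancel₀ T hρ.ne'
    simpa [hr0] using hconv _ r ((one_le_div hρ).2 hρT.le) hr hle'

theorem le_mul_of_sq_le_mul {D : ℝ} (hκ : 1 < κ) (hpos : ∀ r ∈ Ioc 0 ρ, 0 < h r)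
    (hconv : ∀ r, 0 < r → κ * r ≤ ρ → h (κ * r) ^ 2 ≤ h r * h (κ ^ 2 * r))
    (hbase : ∀ r ∈ Ioc (ρ / κ) ρ, h (κ * r) ≤ D * h r) : ∀ r ∈ Ioc 0 ρ, h (κ * r) ≤ D * h r := by
  refine forall_mem_Ioc_of_scale_step hκ hbase fun r hr hle hrec ↦ ?_
  have hr0 := hpos r ⟨hr, by nlinarith⟩
  have hκr0 := hpos (κ * r) ⟨by positivity, hle⟩
  refine le_of_mul_le_mul_right ?_ hκr0
  calc h (κ * r) * h (κ * r) ≤ h r * h (κ ^ 2 * r) := by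
        rw [← sq]
        exact hconv r hr hle
    _ = h r * h (κ * (κ * r)) := by ring_nf
    _ ≤ h r * (D * h (κ * r)) := by gcongr
    _ = D * h r * h (κ * r) := by ring

theorem mul_pow_le_of_le_pow_mul {m : ℝ} {N : ℕ} (hκ : 1 < κ) (hρ : 0 < ρ) (hρ1 : ρ ≤ 1)
    (hm : 0 ≤ m) (hdoubling : ∀ r ∈ Ioc 0 ρ, h (κ * r) ≤ κ ^ N * h r)
    (hbase : ∀ r ∈ Ioc (ρ / κ) ρ, m ≤ h r) : ∀ r ∈ Ioc 0 ρ, m * r ^ N ≤ h r := by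
  have hκ0 : 0 < κ := one_pos.trans hκ
  refine forall_mem_Ioc_of_scale_step hκ (fun r hr ↦ ?_) fun r hr hle hrec ↦ ?_
  · have hr0 : 0 < r := lt_of_le_of_lt (by positivity) hr.1
    exact (mul_le_of_le_one_right hm (pow_le_one₀ hr0.le (hr.2.trans hρ1))).trans (hbase r hr)
  · refine le_of_mul_le_mul_left ?_ (pow_pos hκ0 N)
    calc κ ^ N * (m * r ^ N) = m * (κ * r) ^ N := by ring
      _ ≤ h (κ * r) := hrec
      _ ≤ κ ^ N * h r := hdoubling r ⟨hr, by nlinarith⟩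

end Scales

section UniqueContinuation

variable {E : Type*} [NormedAddCommGroup E] [InnerProductSpace ℝ E] [FiniteDimensional ℝ E]

theorem eqOn_zero_ball_of_eventuallyEq_zero {f : E → ℝ} {x : E} {T : ℝ}
    (hf : HarmonicOnNhd f (closedBall x T)) (h : f =ᶠ[𝓝 x] 0) : EqOn f 0 (ball x T) := by
  borelize E
  intro p hp
  obtain ⟨ρ, hpρ, hρT⟩ := exists_between (mem_ball.1 hp)
  have hρ : 0 < ρ := dist_nonneg.trans_lt hpρ
  have hfc {r : ℝ} (hr : r ≤ T) : ContinuousOn f (closedBall x r) :=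
    hf.continuousOn.mono (closedBall_subset_closedBall hr)
  refine (sqMean_eq_zero_iff hρ (hfc hρT.le)).1 ?_ (mem_ball.2 hpρ)
  by_contra hne
  obtain ⟨ε, hε, hεx⟩ := Metric.eventually_nhds_iff_ball.1 h
  refine ne_zero_of_sq_le_mul hρ hρT (fun κ r hκ hr hle ↦ sqMean_sq_le hr hκ
    (hf.mono (closedBall_subset_closedBall hle))) hne (min ε ρ) ⟨by positivity, min_le_right _ _⟩ ?_
  exact (sqMean_eq_zero_iff (by positivity) (hfc ((min_le_right _ _).trans hρT.le))).2
    fun q hq ↦ hεx q (ball_subset_ball (min_le_left _ _) hq)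

theorem eqOn_zero_of_eventuallyEq_zero {f : E → ℝ} {Ω : Set E} (hΩ : IsOpen Ω)
    (hΩc : IsPreconnected Ω) (hf : HarmonicOnNhd f Ω) {x : E} (hx : x ∈ Ω) (h : f =ᶠ[𝓝 x] 0) :
    EqOn f 0 Ω := by
  suffices Ω ⊆ {y | f =ᶠ[𝓝 y] 0} from fun y hy ↦ (this hy).eq_of_nhds
  refine hΩc.subset_of_closure_inter_subset isOpen_setOfPred_eventually_nhds ⟨x, hx, h⟩ ?_
  rintro y ⟨hycl, hyΩ⟩
  obtain ⟨R, hR, hRΩ⟩ := Metric.isOpen_iff.1 hΩ y hyΩ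
  obtain ⟨z, hz, hyz⟩ := Metric.mem_closure_iff.1 hycl (R / 2) (by positivity)
  have hball : EqOn f 0 (ball z (R / 2)) := eqOn_zero_ball_of_eventuallyEq_zero
    (hf.mono ((closedBall_subset_ball' (by linarith [dist_comm y z])).trans hRΩ)) hz
  exact hball.eventuallyEq_of_mem (isOpen_ball.mem_nhds hyz)

variable [MeasurableSpace E] [BorelSpace E]

theorem sqMean_sub_const_pos {v : E → ℝ} {Ω : Set E} (hΩ : IsOpen Ω) (hΩc : IsPreconnected Ω)
    (hv : HarmonicOnNhd v Ω) (hnc : ¬∃ c, ∀ x ∈ Ω, v x = c) {x : E} {r : ℝ} (hr : 0 < r)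
    (hsub : closedBall x r ⊆ Ω) (μ : ℝ) : 0 < sqMean (fun y ↦ v y - μ) x r := by
  have hharm : HarmonicOnNhd (fun y ↦ v y - μ) Ω := hv.sub (harmonicOnNhd_const μ)
  refine (sqMean_nonneg _ _ _).lt_of_ne' fun h0 ↦ hnc ⟨μ, fun y hy ↦ sub_eq_zero.1 ?_⟩
  have hball := (sqMean_eq_zero_iff hr (hharm.continuousOn.mono hsub)).1 h0
  exact eqOn_zero_of_eventuallyEq_zero hΩ hΩc hharm (hsub (mem_closedBall_self hr.le))
    (hball.eventuallyEq_of_mem (ball_mem_nhds x hr)) hy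

theorem exists_forall_sqMean_mem_Icc {v : E → ℝ} {Ω K : Set E} (hΩ : IsOpen Ω)
    (hΩc : IsPreconnected Ω) (hv : HarmonicOnNhd v Ω) (hnc : ¬∃ c, ∀ x ∈ Ω, v x = c)
    (hK : IsCompact K) {ρ R : ℝ} (hρ : 0 < ρ) (hsub : ∀ x ∈ K, closedBall x R ⊆ Ω) (V : ℝ) :
    ∃ m > 0, ∃ M, ∀ x ∈ K, ∀ μ ∈ Icc (-V) V, ∀ r ∈ Icc ρ R,
      sqMean (fun y ↦ v y - μ) x r ∈ Icc m M := by
  set S : Set (E × ℝ × ℝ) := K ×ˢ Icc (-V) V ×ˢ Icc ρ R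
  have hS : IsCompact S := hK.prod (isCompact_Icc.prod isCompact_Icc)
  have hScont : ContinuousOn
      (fun p : E × ℝ × ℝ ↦ sqMean (fun y ↦ v y - p.2.1) p.1 p.2.2) S := by
    refine continuousOn_sqMean hS ((hv.continuousOn.comp (by fun_prop) fun q hq ↦ ?_).sub
      (by fun_prop))
    exact hsub _ hq.1.1 (add_smul_mem_closedBall (hρ.le.trans hq.1.2.2.1) hq.1.2.2.2 hq.2)
  obtain ⟨m, hm, hmS⟩ := hS.exists_forall_le' hScont (a := 0) fun p hp ↦
    sqMean_sub_const_pos hΩ hΩc hv hnc (hρ.trans_le hp.2.2.1)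
      ((closedBall_subset_closedBall hp.2.2.2).trans (hsub _ hp.1)) p.2.1
  obtain ⟨M, hMS⟩ := hS.exists_bound_of_continuousOn hScont
  exact ⟨m, hm, M, fun x hx μ hμ r hr ↦
    ⟨hmS (x, μ, r) ⟨hx, hμ, hr⟩, (Real.le_norm_self _).trans (hMS (x, μ, r) ⟨hx, hμ, hr⟩)⟩⟩

theorem exists_uniform_doubling {v : E → ℝ} {Ω K : Set E} (hΩ : IsOpen Ω)
    (hΩc : IsPreconnected Ω) (hv : HarmonicOnNhd v Ω) (hnc : ¬∃ c, ∀ x ∈ Ω, v x = c)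
    (hK : IsCompact K) {κ ρ : ℝ} (hκ : 1 < κ) (hρ : 0 < ρ) (hρ1 : ρ ≤ 1)
    (hsub : ∀ x ∈ K, closedBall x (κ * ρ) ⊆ Ω) (V : ℝ) :
    ∃ m > 0, ∃ N : ℕ, ∀ x ∈ K, ∀ μ ∈ Icc (-V) V, ∀ r ∈ Ioc 0 ρ,
      sqMean (fun y ↦ v y - μ) x (κ * r) ≤ κ ^ N * sqMean (fun y ↦ v y - μ) x r ∧
      m * r ^ N ≤ sqMean (fun y ↦ v y - μ) x r := by
  have hκ0 : 0 < κ := one_pos.trans hκ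
  have hρκ : ρ ≤ κ * ρ := le_mul_of_one_le_left hρ.le hκ.le
  have hsubr {x : E} (hx : x ∈ K) {r : ℝ} (hr : r ≤ κ * ρ) : closedBall x r ⊆ Ω :=
    (closedBall_subset_closedBall hr).trans (hsub x hx)
  obtain ⟨m, hm, M, hmM⟩ :=
    exists_forall_sqMean_mem_Icc hΩ hΩc hv hnc hK (div_pos hρ hκ0) hsub V
  obtain ⟨N, hN⟩ := pow_unbounded_of_one_lt (M / m) hκ
  refine ⟨m, hm, N, fun x hx μ hμ ↦ ?_⟩
  have hlow : ∀ r ∈ Ioc (ρ / κ) ρ, m ≤ sqMean (fun y ↦ v y - μ) x r := fun r hr ↦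
    (hmM x hx μ hμ r ⟨hr.1.le, hr.2.trans hρκ⟩).1
  have hdoubling : ∀ r ∈ Ioc 0 ρ,
      sqMean (fun y ↦ v y - μ) x (κ * r) ≤ κ ^ N * sqMean (fun y ↦ v y - μ) x r := by
    refine le_mul_of_sq_le_mul hκ (fun r hr ↦ sqMean_sub_const_pos hΩ hΩc hv hnc hr.1
      (hsubr hx (hr.2.trans hρκ)) μ) (fun r hr hle ↦ sqMean_sq_le hr hκ.le
      ((hv.sub (harmonicOnNhd_const μ)).mono (hsubr hx (by nlinarith)))) fun r hr ↦ ?_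
    have hκr : κ * r ∈ Icc (ρ / κ) (κ * ρ) :=
      ⟨by nlinarith [hr.1, div_pos hρ hκ0], by gcongr; exact hr.2⟩
    calc sqMean (fun y ↦ v y - μ) x (κ * r) ≤ M := (hmM x hx μ hμ _ hκr).2
      _ ≤ κ ^ N * m := ((div_lt_iff₀ hm).1 hN).le
      _ ≤ κ ^ N * sqMean (fun y ↦ v y - μ) x r := by gcongr; exact hlow r hr
  exact fun r hr ↦ ⟨hdoubling r hr, mul_pow_le_of_le_pow_mul hκ hρ hρ1 hm.le hdoubling hlow r hr⟩

end UniqueContinuation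

section Growth

variable {E : Type*} [NormedAddCommGroup E] [InnerProductSpace ℝ E] [FiniteDimensional ℝ E]
  [MeasurableSpace E] [BorelSpace E] {v : E → ℝ} {x z : E}

theorem sqMean_le_of_abs_le {r M : ℝ} (hr : 0 < r) (hv : HarmonicOnNhd v (closedBall x r))
    (hne : ∀ y ∈ closedBall x r, v y ≠ 0) (hM : ∀ y ∈ ball x r, |v y| ≤ M) :
    sqMean v x r ≤ M * |v x| := by
  have hvr := continuousOn_comp_add_smul hr.le hv.continuousOn
  calc sqMean v x r ≤ ∫ y, M * |v (x + r • y)| ∂ballMeasure E := by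
        refine integral_mono_ae (integrable_ballMeasure (hvr.pow 2))
          ((integrable_ballMeasure hvr.abs).const_mul M)
          (ae_ballMeasure_mem_ball.mono fun y hy ↦ ?_)
        have := hM _ (add_smul_mem_ball hr le_rfl hy)
        beta_reduce
        rw [← sq_abs, sq]
        gcongr
    _ = M * |v x| := by
        rw [integral_const_mul]
        exact congrArg (M * ·) (integral_ball_eq_center hr (harmonicOnNhd_abs hv hne))

theorem sq_le_mul_sqMean {r : ℝ} (hr : 0 < r) (hv : HarmonicOnNhd v (closedBall x (4 * r)))
    (hz : dist z x ≤ r) : v z ^ 2 ≤ 4 / 3 * 4 ^ finrank ℝ E * sqMean v x (4 * r) := by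
  refine (sq_le_sqMean hr (hv.mono (closedBall_subset_closedBall' (by linarith)))).trans ?_
  have := integral_ballMeasure_le_of_ball_subset (f := fun y ↦ v y ^ 2) (x := z) (θ := 1 / 2) hr
    (by positivity : 0 < 4 * r) (by norm_num) (ball_subset_ball' (by linarith))
    (hv.continuousOn.pow 2) fun _ _ ↦ sq_nonneg _
  rw [mul_div_cancel_right₀ 4 hr.ne'] at this
  norm_num at this
  exact this

/- If `v` did not grow near `x`, its values there would concentrate around the mean `v x`, since
`|v|` is harmonic; doubling carries this concentration up to the zero `z`, where `v` is far
from `v x`. -/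
theorem exists_growth_of_doubling {δ D ε : ℝ} (hδ : 0 < δ)
    (hv : HarmonicOnNhd v (closedBall x (8 * δ))) (hne : ∀ y ∈ ball x δ, v y ≠ 0)
    (hvz : v z = 0) (hz : dist z x ≤ 2 * δ)
    (hD : sqMean (fun y ↦ v y - v x) x (8 * δ) ≤ D * sqMean (fun y ↦ v y - v x) x (δ / 4))
    (hD0 : 0 ≤ D) (hε : 4 / 3 * 4 ^ finrank ℝ E * D * ε < 1) :
    ∃ x', dist x' x < δ / 4 ∧ (1 + ε) * |v x| < |v x'| := by
  by_contra! hcon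
  have hvδ : HarmonicOnNhd v (closedBall x (δ / 4)) :=
    hv.mono (closedBall_subset_closedBall (by linarith))
  have hupper : sqMean (fun y ↦ v y - v x) x (δ / 4) ≤ ε * v x ^ 2 := by
    have := sqMean_le_of_abs_le (by positivity) hvδ
      (fun y hy ↦ hne y (closedBall_subset_ball (by linarith) hy)) hcon
    rw [sqMean_sub_center (by positivity) hvδ, sub_le_iff_le_add]
    calc sqMean v x (δ / 4) ≤ (1 + ε) * |v x| * |v x| := this
      _ = ε * v x ^ 2 + v x ^ 2 := by rw [mul_assoc, ← sq, sq_abs]; ring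
  have h8 : 4 * (2 * δ) = 8 * δ := by ring
  have hlower :
      v x ^ 2 ≤ 4 / 3 * 4 ^ finrank ℝ E * sqMean (fun y ↦ v y - v x) x (8 * δ) := by
    have hsub : HarmonicOnNhd (fun y ↦ v y - v x) (closedBall x (4 * (2 * δ))) :=
      h8 ▸ hv.sub (harmonicOnNhd_const (v x))
    simpa [hvz, h8] using sq_le_mul_sqMean (by positivity) hsub hz
  have hvx : 0 < v x ^ 2 := sq_pos_of_ne_zero (hne x (mem_ball_self hδ))
  refine lt_irrefl (v x ^ 2) ?_
  calc v x ^ 2 ≤ 4 / 3 * 4 ^ finrank ℝ E * (D * (ε * v x ^ 2)) :=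
        hlower.trans (by gcongr; exact hD.trans (by gcongr))
    _ = 4 / 3 * 4 ^ finrank ℝ E * D * ε * v x ^ 2 := by ring
    _ < v x ^ 2 := mul_lt_of_lt_one_left hvx hε

theorem sqMean_le_mul_sq {r : ℝ} (hr : 0 < r) (hv : HarmonicOnNhd v (closedBall x (3 * r)))
    (hne : ∀ y ∈ closedBall x (3 * r), v y ≠ 0) :
    sqMean v x r ≤ 9 / 5 * 3 ^ finrank ℝ E * v x ^ 2 := by
  have hsub : closedBall x r ⊆ closedBall x (3 * r) := closedBall_subset_closedBall (by linarith)
  have := sqMean_le_of_abs_le hr (hv.mono hsub) (fun y hy ↦ hne y (hsub hy))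
    fun y hy ↦ harnack_abs hr hv hne (mem_ball.1 hy).le
  rwa [mul_assoc, ← sq, sq_abs] at this

end Growth

section NodalSet

/-- The zero set of `f` within `Ω`, for functions on any type; it unfolds to `zeroSet` on `En n`. -/
def nodalSet {X : Type*} (f : X → ℝ) (Ω : Set X) : Set X := {x ∈ Ω | f x = 0}

theorem ne_zero_of_nodalSet_eq {X : Type*} {f g : X → ℝ} {Ω : Set X} {x : X}
    (hfg : nodalSet f Ω = nodalSet g Ω) (hx : x ∈ Ω) (hfx : f x ≠ 0) : g x ≠ 0 := fun hgx ↦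
  hfx (hfg.ge ⟨hx, hgx⟩ : x ∈ nodalSet f Ω).2

variable {X : Type*} [PseudoMetricSpace X] {f : X → ℝ} {Ω : Set X} {p y : X}

theorem infDist_nodalSet_pos (hΩ : IsOpen Ω) (hf : ContinuousOn f Ω)
    (hne : (nodalSet f Ω).Nonempty) (hp : p ∈ Ω) (hfp : f p ≠ 0) :
    0 < infDist p (nodalSet f Ω) := by
  refine (infDist_pos_iff_notMem_closure hne).1 fun hcl ↦ ?_
  obtain ⟨q, ⟨_, hq⟩, hqZ⟩ := mem_closure_iff.1 hcl (Ω ∩ f ⁻¹' {0}ᶜ)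
    (hf.isOpen_inter_preimage hΩ isOpen_compl_singleton) ⟨hp, hfp⟩
  exact hq hqZ.2

theorem ne_zero_of_dist_lt_infDist_nodalSet (hy : y ∈ Ω)
    (h : dist y p < infDist p (nodalSet f Ω)) : f y ≠ 0 := fun h0 ↦
  (infDist_le_dist_of_mem (x := p) (show y ∈ nodalSet f Ω from ⟨hy, h0⟩)).not_gt (dist_comm y p ▸ h)

end NodalSet

section UnitBall

variable {E : Type*} [NormedAddCommGroup E] [InnerProductSpace ℝ E] [FiniteDimensional ℝ E]
  {u v : E → ℝ}

theorem exists_unitBall_doubling [MeasurableSpace E] [BorelSpace E]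
    (hv : HarmonicOnNhd v (ball 0 1)) (hnc : ¬∃ c, ∀ x ∈ ball (0 : E) 1, v x = c) (V : ℝ) :
    ∃ m > 0, ∃ N : ℕ, ∀ x ∈ closedBall (0 : E) (1 / 4), ∀ μ ∈ Icc (-V) V, ∀ δ ∈ Ioc 0 (1 / 16),
      sqMean (fun y ↦ v y - μ) x (8 * δ) ≤ 32 ^ N * sqMean (fun y ↦ v y - μ) x (δ / 4) ∧
      m * (δ / 4) ^ N ≤ sqMean (fun y ↦ v y - μ) x (δ / 4) := by
  obtain ⟨m, hm, N, hN⟩ := exists_uniform_doubling isOpen_ball (convex_ball 0 1).isPreconnected hv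
    hnc (isCompact_closedBall (0 : E) (1 / 4)) (κ := 32) (ρ := 1 / 64) (by norm_num) (by norm_num)
    (by norm_num)
    (fun x hx ↦ closedBall_subset_ball' (by linarith [mem_closedBall.1 hx])) V
  refine ⟨m, hm, N, fun x hx μ hμ δ hδ ↦ ?_⟩
  convert hN x hx μ hμ (δ / 4) ⟨by linarith [hδ.1], by linarith [hδ.2]⟩ using 3
  ring

theorem exists_forall_growth (hv : HarmonicOnNhd v (ball 0 1))
    (hnc : ¬∃ c, ∀ x ∈ ball (0 : E) 1, v x = c) (hne : (nodalSet v (ball 0 1)).Nonempty) :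
    ∃ ε > 0, ∀ x ∈ closedBall (0 : E) (1 / 4), v x ≠ 0 →
      infDist x (nodalSet v (ball 0 1)) ≤ 1 / 16 →
      ∃ x', dist x' x < infDist x (nodalSet v (ball 0 1)) / 4 ∧ (1 + ε) * |v x| < |v x'| := by
  borelize E
  obtain ⟨V, hV⟩ := (isCompact_closedBall (0 : E) (1 / 4)).exists_bound_of_continuousOn
    (hv.continuousOn.mono (closedBall_subset_ball (by norm_num)))
  obtain ⟨_, _, N, hN⟩ := exists_unitBall_doubling hv hnc V
  set C : ℝ := 4 / 3 * 4 ^ finrank ℝ E * 32 ^ N with hC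
  refine ⟨(2 * C)⁻¹, by positivity, fun x hx hvx hδ16 ↦ ?_⟩
  have hx0 := mem_closedBall.1 hx
  set δ := infDist x (nodalSet v (ball 0 1))
  have hδ : 0 < δ := infDist_nodalSet_pos isOpen_ball hv.continuousOn hne
    (closedBall_subset_ball (by norm_num) hx) hvx
  obtain ⟨z, hz, hxz⟩ := (infDist_lt_iff hne).1 (show δ < 2 * δ by linarith)
  refine exists_growth_of_doubling (D := 32 ^ N) hδ
    (hv.mono (closedBall_subset_ball' (by linarith)))
    (fun y hy ↦ ne_zero_of_dist_lt_infDist_nodalSet (ball_subset_ball' (by linarith) hy) hy) hz.2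
    (dist_comm z x ▸ hxz.le) ?_ (by positivity) ?_
  · exact (hN x hx (v x) (abs_le.1 (hV x hx)) δ ⟨hδ, hδ16⟩).1
  · rw [← hC, mul_inv, mul_left_comm, mul_inv_cancel₀ (by positivity)]
    norm_num

theorem exists_pow_le_mul_pow {A θ : ℝ} (hA : 0 < A) (hθ : θ < 1) (N : ℕ) :
    ∃ M ≠ 0, ∀ δ ∈ Icc 0 θ, δ ^ M ≤ A * δ ^ N := by
  obtain ⟨j, hj⟩ := exists_pow_lt_of_lt_one hA hθ
  refine ⟨j + N + 1, by lia, fun δ hδ ↦ ?_⟩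
  have hδ0 := hδ.1
  calc δ ^ (j + N + 1) ≤ δ ^ (j + N) :=
        pow_le_pow_of_le_one hδ0 (hδ.2.trans hθ.le) (Nat.le_succ _)
    _ = δ ^ j * δ ^ N := pow_add δ j N
    _ ≤ A * δ ^ N := by
        gcongr
        exact (pow_le_pow_left₀ hδ0 hδ.2 j).trans hj.le

theorem exists_mul_infDist_pow_le_abs (hv : HarmonicOnNhd v (ball 0 1))
    (hnc : ¬∃ c, ∀ x ∈ ball (0 : E) 1, v x = c) (hne : (nodalSet v (ball 0 1)).Nonempty) {V : ℝ}
    (hV : 0 < V) :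
    ∃ N ≠ 0, ∀ x ∈ closedBall (0 : E) (1 / 4), v x ≠ 0 →
      infDist x (nodalSet v (ball 0 1)) ≤ 1 / 16 →
      V * infDist x (nodalSet v (ball 0 1)) ^ N ≤ |v x| := by
  borelize E
  obtain ⟨m, hm, N, hN⟩ := exists_unitBall_doubling hv hnc 0
  set H : ℝ := 9 / 5 * 3 ^ finrank ℝ E
  obtain ⟨M, hM, hMN⟩ := exists_pow_le_mul_pow (A := m / (4 ^ N * H * V ^ 2)) (θ := 1 / 16)
    (by positivity) (by norm_num) N
  refine ⟨M, hM, fun x hx hvx hδ16 ↦ ?_⟩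
  have hx0 := mem_closedBall.1 hx
  set δ := infDist x (nodalSet v (ball 0 1))
  have hδ : 0 < δ := infDist_nodalSet_pos isOpen_ball hv.continuousOn hne
    (closedBall_subset_ball (by norm_num) hx) hvx
  have hsub : closedBall x (3 * (δ / 4)) ⊆ ball 0 1 := closedBall_subset_ball' (by linarith)
  have hlow : m * (δ / 4) ^ N ≤ H * v x ^ 2 := by
    have := (hN x hx 0 (by simp) δ ⟨hδ, hδ16⟩).2
    simp only [sub_zero] at this
    exact this.trans (sqMean_le_mul_sq (by positivity) (hv.mono hsub) fun y hy ↦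
      ne_zero_of_dist_lt_infDist_nodalSet (hsub hy) (by linarith [mem_closedBall.1 hy]))
  refine le_of_sq_le_sq ?_ (abs_nonneg _)
  calc (V * δ ^ M) ^ 2 = V ^ 2 * δ ^ M * δ ^ M := by ring
    _ ≤ V ^ 2 * δ ^ M * 1 := by
        gcongr
        exact pow_le_one₀ hδ.le (by linarith)
    _ ≤ V ^ 2 * (m / (4 ^ N * H * V ^ 2) * δ ^ N) := by
        rw [mul_one]
        gcongr
        exact hMN δ ⟨hδ.le, hδ16⟩
    _ = m * (δ / 4) ^ N / H := by
        rw [div_pow]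
        field_simp
    _ ≤ |v x| ^ 2 := by
        rw [sq_abs, div_le_iff₀' (by positivity)]
        exact hlow

theorem abs_le_mul_of_dist_lt_infDist_nodalSet (hu : HarmonicOnNhd u (ball 0 1)) {p p' : E}
    (hδ : 0 < infDist p (nodalSet u (ball 0 1)))
    (hp : infDist p (nodalSet u (ball 0 1)) + dist p 0 ≤ 1)
    (hpp' : dist p' p < infDist p (nodalSet u (ball 0 1)) / 4) :
    |u p| ≤ 9 / 5 * 3 ^ finrank ℝ E * |u p'| := by
  set δ := infDist p (nodalSet u (ball 0 1))
  have hsub : closedBall p' (3 * (δ / 4)) ⊆ ball p δ := closedBall_subset_ball' (by linarith)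
  have hsub1 : closedBall p' (3 * (δ / 4)) ⊆ ball 0 1 := hsub.trans (ball_subset_ball' hp)
  exact harnack_abs (by positivity) (hu.mono hsub1)
    (fun y hy ↦ ne_zero_of_dist_lt_infDist_nodalSet (hsub1 hy) (hsub hy))
    (dist_comm p p' ▸ hpp'.le)

end UnitBall

section Climbing

variable {X : Type*} [MetricSpace X]

-- A maximizer of `ψ` among the points reachable from `x` replaces an infinite iteration of steps.
theorem exists_of_forall_exists_climb {K : Set X} (hK : IsCompact K) {ψ φ : X → ℝ}
    (hψ : ContinuousOn ψ K) (hφ : ContinuousOn φ K) {P : X → Prop} {x : X} (hx : x ∈ K)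
    (hclimb : ∀ p ∈ K, dist p x ≤ ψ p - ψ x → φ x ≤ φ p → ¬P p →
      ∃ p' ∈ K, dist p' p ≤ ψ p' - ψ p ∧ ψ p < ψ p' ∧ φ p ≤ φ p') :
    ∃ p ∈ K, P p ∧ φ x ≤ φ p := by
  have hS : IsCompact ({p ∈ K | dist p x ≤ ψ p - ψ x} ∩ {p ∈ K | φ x ≤ φ p}) :=
    hK.of_isClosed_subset ((hK.isClosed.isClosed_le (by fun_prop) (by fun_prop)).inter
      (hK.isClosed.isClosed_le continuousOn_const hφ)) fun p hp ↦ hp.1.1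
  obtain ⟨p, ⟨⟨hpK, hpx⟩, _, hφp⟩, hmax⟩ := hS.exists_isMaxOn ⟨x, ⟨hx, by simp⟩, hx, le_rfl⟩
    (hψ.mono fun p hp ↦ hp.1.1)
  refine ⟨p, hpK, by_contra fun hP ↦ ?_, hφp⟩
  obtain ⟨p', hpK', hpp', hψ', hφ'⟩ := hclimb p hpK hpx hφp hP
  refine hψ'.not_ge (hmax ⟨⟨hpK', ?_⟩, hpK', hφp.trans hφ'⟩)
  linarith [dist_triangle p' p x]

theorem exists_forall_infDist_lt_imp_abs_lt {Z : Set X} {f : X → ℝ} {x₀ : X} {r R τ : ℝ}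
    (hK : IsCompact (closedBall x₀ R)) (hrR : r < R) (hf : ContinuousOn f (closedBall x₀ R))
    (hZ : Z.Nonempty) (hfZ : ∀ z ∈ Z ∩ closedBall x₀ R, f z = 0) (hτ : 0 < τ) :
    ∃ c > 0, ∀ p ∈ closedBall x₀ r, infDist p Z < c → |f p| < τ := by
  obtain ⟨c, hc, hunif⟩ :=
    uniformContinuousOn_iff.1 (hK.uniformContinuousOn_of_continuous hf) τ hτ
  refine ⟨min c (R - r), lt_min hc (sub_pos.2 hrR), fun p hp hpZ ↦ ?_⟩
  obtain ⟨z, hzZ, hpz⟩ := (infDist_lt_iff hZ).1 hpZ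
  have hzK : z ∈ closedBall x₀ R := by
    have := hpz.trans_le (min_le_right _ _)
    have := dist_triangle_left z x₀ p
    have := mem_closedBall.1 hp
    exact mem_closedBall.2 (by linarith)
  simpa [hfZ z ⟨hzZ, hzK⟩] using
    hunif p (closedBall_subset_closedBall hrR.le hp) z hzK (hpz.trans_le (min_le_left _ _))

end Climbing

theorem exists_le_rpow_sub_rpow {ε : ℝ} (hε : 0 < ε) {N : ℕ} (hN : N ≠ 0) :
    ∃ B ≥ 0, ∀ a a' δ : ℝ, 0 ≤ a → 0 ≤ δ → δ ^ N ≤ a → (1 + ε) * a ≤ a' →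
      δ / 4 ≤ B * a' ^ (N⁻¹ : ℝ) - B * a ^ (N⁻¹ : ℝ) := by
  set q : ℝ := (N : ℝ)⁻¹
  have hη : 0 < (1 + ε) ^ q - 1 := sub_pos.2 (Real.one_lt_rpow (by linarith) (by positivity))
  refine ⟨(4 * ((1 + ε) ^ q - 1))⁻¹, by positivity, fun a a' δ ha hδ hδa haa' ↦ ?_⟩
  have hδ' : δ ≤ a ^ q := by
    rw [← Real.pow_rpow_inv_natCast hδ hN]
    gcongr
  have ha' : (1 + ε) ^ q * a ^ q ≤ a' ^ q := by
    rw [← Real.mul_rpow (by positivity) ha]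
    gcongr
  calc δ / 4 ≤ a ^ q / 4 := by gcongr
    _ = (4 * ((1 + ε) ^ q - 1))⁻¹ * ((1 + ε) ^ q * a ^ q - a ^ q) := by field_simp
    _ ≤ (4 * ((1 + ε) ^ q - 1))⁻¹ * (a' ^ q - a ^ q) := by gcongr
    _ = _ := mul_sub _ _ _

theorem mul_pow_le_mul_pow_of_le_pow_mul {a a' b b' κ H : ℝ} {γ : ℕ} (hγ : H ≤ κ ^ γ)
    (ha : a ≤ H * a') (hκ : 0 ≤ κ) (ha' : 0 ≤ a') (hb : 0 ≤ b) (hbb' : κ * b ≤ b') :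
    a * b ^ γ ≤ a' * b' ^ γ :=
  calc a * b ^ γ ≤ κ ^ γ * a' * b ^ γ := by
        gcongr
        exact ha.trans (by gcongr)
    _ = a' * (κ * b) ^ γ := by ring
    _ ≤ a' * b' ^ γ := by gcongr

theorem mul_pow_le_of_mul_pow_le_mul_pow {a b d s t V : ℝ} {γ : ℕ} (ha : 0 ≤ a) (hb : 0 ≤ b)
    (hd : 0 ≤ d) (ht : 0 ≤ t) (hV : 0 < V) (hds : V * d ≤ s) (htV : t ≤ V)
    (h : a * s ^ γ ≤ b * t ^ γ) : a * d ^ γ ≤ b := by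
  refine le_of_mul_le_mul_left ?_ (pow_pos hV γ)
  calc V ^ γ * (a * d ^ γ) = a * (V * d) ^ γ := by ring
    _ ≤ a * s ^ γ := by gcongr
    _ ≤ b * t ^ γ := h
    _ ≤ b * V ^ γ := by gcongr
    _ = V ^ γ * b := mul_comm _ _

section FarPoint

variable {E : Type*} [NormedAddCommGroup E] [InnerProductSpace ℝ E] [FiniteDimensional ℝ E]
  {v : E → ℝ}

theorem exists_climbing_potential (hv : HarmonicOnNhd v (ball 0 1))
    (hnc : ¬∃ c, ∀ x ∈ ball (0 : E) 1, v x = c) (hne : (nodalSet v (ball 0 1)).Nonempty) :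
    ∃ ε > 0, ∃ ψ : E → ℝ, ContinuousOn ψ (ball 0 1) ∧ (∀ z ∈ nodalSet v (ball 0 1), ψ z = 0) ∧
      0 ≤ ψ ∧ ∀ x ∈ closedBall (0 : E) (1 / 4), v x ≠ 0 →
        infDist x (nodalSet v (ball 0 1)) ≤ 1 / 16 →
        ∃ x', dist x' x < infDist x (nodalSet v (ball 0 1)) / 4 ∧
          infDist x (nodalSet v (ball 0 1)) / 4 ≤ ψ x' - ψ x ∧ (1 + ε) * |v x| ≤ |v x'| := by
  obtain ⟨ε, hε, hgrowth⟩ := exists_forall_growth hv hnc hne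
  obtain ⟨N, hN, hlower⟩ := exists_mul_infDist_pow_le_abs hv hnc hne one_pos
  simp only [one_mul] at hlower
  obtain ⟨B, hB, hincr⟩ := exists_le_rpow_sub_rpow hε hN
  refine ⟨ε, hε, fun y ↦ B * |v y| ^ (N⁻¹ : ℝ), ?_, ?_, fun y ↦ by positivity, ?_⟩
  · exact continuousOn_const.mul (hv.continuousOn.abs.rpow_const fun _ _ ↦ Or.inr (by positivity))
  · rintro z ⟨_, hz⟩
    simp [hz, Real.zero_rpow (inv_ne_zero (Nat.cast_ne_zero.2 hN))]
  · intro x hx hvx hδ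
    obtain ⟨x', hx', hvx'⟩ := hgrowth x hx hvx hδ
    exact ⟨x', hx', hincr _ _ _ (abs_nonneg _) infDist_nonneg (hlower x hx hvx hδ) hvx'.le, hvx'.le⟩

theorem exists_forall_exists_mul_pow_le (hv : HarmonicOnNhd v (ball 0 1))
    (hnc : ¬∃ c, ∀ x ∈ ball (0 : E) 1, v x = c) (hne : (nodalSet v (ball 0 1)).Nonempty) :
    ∃ γ ≠ 0, ∃ c > 0, ∀ u : E → ℝ, HarmonicOnNhd u (ball 0 1) →
      nodalSet u (ball 0 1) = nodalSet v (ball 0 1) → ∀ x ∈ ball (0 : E) (1 / 8), u x ≠ 0 →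
        ∃ p ∈ closedBall (0 : E) (1 / 4), c ≤ infDist p (nodalSet v (ball 0 1)) ∧
          |u x| * |v x| ^ γ ≤ |u p| * |v p| ^ γ := by
  obtain ⟨ε, hε, ψ, hψ, hψZ, hψ0, hgrowth⟩ := exists_climbing_potential hv hnc hne
  obtain ⟨γ, hγ⟩ := pow_unbounded_of_one_lt (9 / 5 * 3 ^ finrank ℝ E) (lt_add_of_pos_right 1 hε)
  have hγ0 : γ ≠ 0 := by
    rintro rfl
    linarith [one_le_pow₀ (n := finrank ℝ E) (show (1 : ℝ) ≤ 3 by norm_num)]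
  obtain ⟨c, hc, hψc⟩ := exists_forall_infDist_lt_imp_abs_lt (r := 1 / 4) (τ := 1 / 16)
    (isCompact_closedBall (0 : E) (1 / 2)) (by norm_num)
    (hψ.mono (closedBall_subset_ball (by norm_num))) hne (fun z hz ↦ hψZ z hz.1) (by norm_num)
  refine ⟨γ, hγ0, min c (1 / 16), by positivity, fun u hu huv x hx hux ↦ ?_⟩
  have hvx : v x ≠ 0 := ne_zero_of_nodalSet_eq huv (ball_subset_ball (by norm_num) hx) hux
  have hsub : closedBall (0 : E) (1 / 4) ⊆ ball 0 1 := closedBall_subset_ball (by norm_num)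
  refine exists_of_forall_exists_climb (isCompact_closedBall (0 : E) (1 / 4)) (hψ.mono hsub)
    ((hu.continuousOn.abs.mul (hv.continuousOn.abs.pow γ)).mono hsub)
    (ball_subset_closedBall.trans (closedBall_subset_closedBall (by norm_num)) hx)
    fun p hp hpx hup hpc ↦ ?_
  obtain ⟨hpc, hp16⟩ := lt_min_iff.1 (not_le.1 hpc)
  have hvp : v p ≠ 0 := by
    rintro h
    have : 0 < |u x| * |v x| ^ γ := by positivity
    exact absurd hup (by simpa [h, hγ0] using this)
  obtain ⟨p', hpp', hψp', hvp'⟩ := hgrowth p hp hvp hp16.le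
  have hδ := infDist_nodalSet_pos isOpen_ball hv.continuousOn hne (hsub hp) hvp
  have hψp := (abs_lt.1 (hψc p hp hpc)).2
  have hψx : 0 ≤ ψ x := hψ0 x
  have hx0 := mem_ball.1 hx
  have hp0 := mem_closedBall.1 hp
  refine ⟨p', ?_, hpp'.le.trans hψp', by linarith, ?_⟩
  · have := dist_triangle4 p' p x 0
    exact mem_closedBall.2 (by linarith)
  · exact mul_pow_le_mul_pow_of_le_pow_mul hγ.le
      (abs_le_mul_of_dist_lt_infDist_nodalSet hu (huv ▸ hδ) (by rw [huv]; linarith) (huv ▸ hpp'))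
      (by positivity) (abs_nonneg _) (abs_nonneg _) hvp'

theorem exists_ne_zero_mem_ball (hv : HarmonicOnNhd v (ball 0 1))
    (hnc : ¬∃ c, ∀ x ∈ ball (0 : E) 1, v x = c) {r : ℝ} (hr : 0 < r) :
    ∃ p ∈ ball (0 : E) r, v p ≠ 0 := by
  by_contra! h
  exact hnc ⟨0, eqOn_zero_of_eventuallyEq_zero isOpen_ball (convex_ball 0 1).isPreconnected hv
    (mem_ball_self one_pos) (eventuallyEq_of_mem (ball_mem_nhds 0 hr) h)⟩

theorem stmt14_general (hv : HarmonicOnNhd v (ball 0 1))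
    (hnc : ¬∃ c, ∀ x ∈ ball (0 : E) 1, v x = c)
    (hZ : (nodalSet v (ball 0 1) ∩ ball (0 : E) (1 / 2)).Nonempty) :
    ∃ β > (0 : ℝ), ∃ c : ℝ, 0 < c ∧ c < 1 / 2 ∧
      ∀ u : E → ℝ, HarmonicOnNhd u (ball 0 1) →
        nodalSet u (ball 0 1) = nodalSet v (ball 0 1) →
        ∀ x ∈ ball (0 : E) (1 / 8),
          ∃ y ∈ ball (0 : E) (1 / 2),
            c ≤ infDist y (nodalSet v (ball 0 1)) ∧
            |u x| * infDist x (nodalSet v (ball 0 1)) ^ β ≤ |u y| := by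
  obtain ⟨z, hz, hz0⟩ := hZ
  obtain ⟨V, hV⟩ := (isCompact_closedBall (0 : E) (1 / 4)).exists_bound_of_continuousOn
    (hv.continuousOn.mono (closedBall_subset_ball (by norm_num)))
  obtain ⟨N, hN, hlower⟩ :=
    exists_mul_infDist_pow_le_abs hv hnc ⟨z, hz⟩ (one_pos.trans_le (le_max_right V 1))
  obtain ⟨γ, hγ, c, hc, hfar⟩ := exists_forall_exists_mul_pow_le hv hnc ⟨z, hz⟩
  obtain ⟨p₀, hp₀, hvp₀⟩ := exists_ne_zero_mem_ball hv hnc (show (0 : ℝ) < 1 / 2 by norm_num)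
  have hδ₀ := infDist_nodalSet_pos isOpen_ball hv.continuousOn ⟨z, hz⟩
    (ball_subset_ball (by norm_num) hp₀) hvp₀
  set Z := nodalSet v (ball 0 1)
  refine ⟨(N * γ : ℕ), by positivity, min (min c (1 / 16)) (infDist p₀ Z), by positivity,
    ((min_le_left _ _).trans (min_le_right _ _)).trans_lt (by norm_num), fun u hu huv x hx ↦ ?_⟩
  rw [Real.rpow_natCast]
  by_cases hux : u x = 0
  · exact ⟨p₀, hp₀, min_le_right _ _, by simp [hux]⟩
  by_cases hxc : min c (1 / 16) ≤ infDist x Z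
  · refine ⟨x, ball_subset_ball (by norm_num) hx, (min_le_left _ _).trans hxc,
      mul_le_of_le_one_right (abs_nonneg _) (pow_le_one₀ infDist_nonneg ?_)⟩
    have := dist_triangle_right x z 0
    linarith [infDist_le_dist_of_mem (x := x) hz, mem_ball.1 hx, mem_ball.1 hz0]
  obtain ⟨p, hp, hcp, hup⟩ := hfar u hu huv x hx hux
  have hx4 : x ∈ closedBall (0 : E) (1 / 4) :=
    ball_subset_closedBall (ball_subset_ball (by norm_num) hx)
  have hvx : v x ≠ 0 := ne_zero_of_nodalSet_eq huv (ball_subset_ball (by norm_num) hx) hux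
  have hlow := hlower x hx4 hvx ((not_le.1 hxc).le.trans (min_le_right _ _))
  refine ⟨p, closedBall_subset_ball (by norm_num) hp,
    (min_le_left _ _).trans ((min_le_left _ _).trans hcp), ?_⟩
  rw [pow_mul]
  exact mul_pow_le_of_mul_pow_le_mul_pow (abs_nonneg _) (abs_nonneg _)
    (pow_nonneg infDist_nonneg N) (abs_nonneg _) (by positivity) hlow
    ((hV p hp).trans (le_max_left _ _)) hup

end FarPoint

theorem laplacianAt_eq_laplacian {n : ℕ} (u : En n → ℝ) : laplacianAt u = Δ u := by
  rw [laplacian_eq_iteratedFDeriv_orthonormalBasis u (EuclideanSpace.basisFun (Fin n) ℝ)]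
  ext x
  simp only [laplacianAt, EuclideanSpace.basisFun_apply]

theorem harmonicOnSet_iff_harmonicOnNhd {n : ℕ} {u : En n → ℝ} {Ω : Set (En n)}
    (hΩ : IsOpen Ω) : HarmonicOnSet u Ω ↔ HarmonicOnNhd u Ω := by
  rw [HarmonicOnSet, laplacianAt_eq_laplacian]
  refine ⟨fun ⟨hu, hΔ⟩ x hx ↦ ⟨hu.contDiffAt (hΩ.mem_nhds hx), ?_⟩, fun h ↦
    ⟨fun x hx ↦ (h x hx).1.contDiffWithinAt, fun x hx ↦ (h x hx).2.eq_of_nhds⟩⟩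
  filter_upwards [hΩ.mem_nhds hx] with y hy using hΔ y hy

theorem stmt14 (n : ℕ) (v : En n → ℝ)
    (hv : HarmonicOnSet v (ball 0 1))
    (hnc : ¬ ∃ c : ℝ, ∀ x ∈ ball (0 : En n) 1, v x = c)
    (hZ : (zeroSet v (ball 0 1) ∩ ball (0 : En n) (1/2)).Nonempty) :
    ∃ β > (0 : ℝ), ∃ c : ℝ, 0 < c ∧ c < 1/2 ∧
      ∀ u : En n → ℝ, HarmonicOnSet u (ball 0 1) →
        zeroSet u (ball 0 1) = zeroSet v (ball 0 1) →
        ∀ x ∈ ball (0 : En n) (1/8),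
          ∃ y ∈ ball (0 : En n) (1/2),
            c ≤ infDist y (zeroSet v (ball 0 1)) ∧
            |u x| * infDist x (zeroSet v (ball 0 1)) ^ β ≤ |u y| := by
  simp only [harmonicOnSet_iff_harmonicOnNhd isOpen_ball] at hv ⊢
  exact stmt14_general hv hnc hZ
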